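/- arXiv:0808.3262 — 2 statements merged into one kernel-verified Lean document; each statement's English description precedes it below -/
import Mathlib

section
/- Let L be a Lie algebra over a field F of characteristic 0, and let S(L) denote the sum of all solvable ideals of L. Then S(L) is a characteristic ideal of L, i.e. D(S(L)) ⊆ S(L) for every derivation D of L. -/
open LieAlgebra in
theorem aux_low {F L : Type*} [Field F] [LieRing L] [LieAlgebra F L]
    (I : LieIdeal F L) (D : LieDerivation F L L) (k : ℕ) :
    ∀ x ∈ derivedSeriesOfIdeal F L k I, ∀ i < 2 ^ k, D^[i] x ∈ I := by
  induction k with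
  | zero =>
    intro x hx i hi
    obtain rfl : i = 0 := by simpa using hi
    simpa using hx
  | succ k ih =>
    intro x hx i hi
    rw [derivedSeriesOfIdeal_succ, ← LieSubmodule.mem_toSubmodule,
      LieSubmodule.lieIdeal_oper_eq_linear_span'] at hx
    have key : Submodule.span F {⁅x, n⁆ | (x ∈ derivedSeriesOfIdeal F L k I)
        (n ∈ derivedSeriesOfIdeal F L k I)} ≤ I.toSubmodule.comap (D.toLinearMap ^ i) := by
      rw [Submodule.span_le]
      rintro _ ⟨a, ha, b, hb, rfl⟩
      simp only [SetLike.mem_coe, Submodule.mem_comap, Module.End.pow_apply,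
        LieSubmodule.mem_toSubmodule]
      change D^[i] ⁅a, b⁆ ∈ I
      rw [LieDerivation.iterate_apply_lie]
      refine sum_mem fun p hp => nsmul_mem ?_ _
      rw [Finset.HasAntidiagonal.mem_antidiagonal] at hp
      rw [pow_succ] at hi
      rcases lt_or_ge p.1 (2 ^ k) with h | h
      · exact lie_mem_left F L I _ _ (ih a ha _ h)
      · exact lie_mem_right F L I _ _ (ih b hb _ (by omega))
    have := key hx
    simp only [Submodule.mem_comap, Module.End.pow_apply, LieSubmodule.mem_toSubmodule] at this
    exact this

/-- The ideal `I + D(I)`. -/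
def addDer {F L : Type*} [Field F] [LieRing L] [LieAlgebra F L]
    (I : LieIdeal F L) (D : LieDerivation F L L) : LieIdeal F L where
  toSubmodule := I.toSubmodule ⊔ I.toSubmodule.map D.toLinearMap
  lie_mem := by
    intro x m hm
    change m ∈ I.toSubmodule ⊔ I.toSubmodule.map D.toLinearMap at hm
    change ⁅x, m⁆ ∈ I.toSubmodule ⊔ I.toSubmodule.map D.toLinearMap
    obtain ⟨a, ha, _, ⟨b, hb, rfl⟩, rfl⟩ := Submodule.mem_sup.1 hm
    have e : ⁅x, a + D.toLinearMap b⁆ = (⁅x, a⁆ - ⁅D x, b⁆) + D.toLinearMap ⁅x, b⁆ := by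
      change ⁅x, a + D b⁆ = (⁅x, a⁆ - ⁅D x, b⁆) + D ⁅x, b⁆
      rw [LieDerivation.apply_lie_eq_add, lie_add]
      abel
    rw [e]
    exact Submodule.add_mem_sup
      (sub_mem (lie_mem_right F L I _ _ ha) (lie_mem_right F L I _ _ hb))
      (Submodule.mem_map_of_mem (lie_mem_right F L I _ _ hb))

open LieAlgebra in
theorem aux_high {F L : Type*} [Field F] [CharZero F] [LieRing L] [LieAlgebra F L]
    (I : LieIdeal F L) (D : LieDerivation F L L) (k : ℕ) :
    (derivedSeriesOfIdeal F L k (addDer I D)).toSubmodule ≤ I.toSubmodule ⊔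
      (derivedSeriesOfIdeal F L k I).toSubmodule.map (D.toLinearMap ^ (2 ^ k)) := by
  induction k with
  | zero => simp [addDer]
  | succ k ih =>
    rw [derivedSeriesOfIdeal_succ, LieSubmodule.lieIdeal_oper_eq_linear_span', Submodule.span_le]
    rintro _ ⟨u, hu, v, hv, rfl⟩
    obtain ⟨a, ha, _, ⟨x, hx, rfl⟩, rfl⟩ := Submodule.mem_sup.1 (ih hu)
    obtain ⟨b, hb, _, ⟨y, hy, rfl⟩, rfl⟩ := Submodule.mem_sup.1 (ih hv)
    simp only [Module.End.pow_apply]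
    change ⁅a + D^[2 ^ k] x, b + D^[2 ^ k] y⁆ ∈ I.toSubmodule ⊔ _
    set n := 2 ^ k with hn
    have h1 : ⁅D^[n] x, D^[n] y⁆ ∈ I.toSubmodule ⊔
        (derivedSeriesOfIdeal F L (k + 1) I).toSubmodule.map (D.toLinearMap ^ (2 ^ (k + 1))) := by
      have hl := LieDerivation.iterate_apply_lie D (2 * n) x y
      rw [← Finset.add_sum_erase _ _ (a := (n, n))
        (by rw [Finset.HasAntidiagonal.mem_antidiagonal]; omega)] at hl
      have hr : ∑ p ∈ (Finset.HasAntidiagonal.antidiagonal (2 * n)).erase (n, n),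
          (2 * n).choose p.1 • ⁅D^[p.1] x, D^[p.2] y⁆ ∈ I := by
        refine sum_mem fun p hp => nsmul_mem ?_ _
        rw [Finset.mem_erase, Finset.HasAntidiagonal.mem_antidiagonal] at hp
        rcases lt_or_ge p.1 n with h | h
        · exact lie_mem_left F L I _ _ (aux_low I D k x hx _ h)
        · refine lie_mem_right F L I _ _ (aux_low I D k y hy _ ?_)
          by_contra hc
          exact hp.1 (Prod.ext (by dsimp only; omega) (by dsimp only; omega))
      have hc : ((2 * n).choose n : F) ≠ 0 :=
        Nat.cast_ne_zero.2 (Nat.choose_pos (by omega)).ne'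
      rw [← Submodule.smul_mem_iff _ hc, Nat.cast_smul_eq_nsmul, eq_sub_of_add_eq hl.symm]
      refine sub_mem (Submodule.mem_sup_right ?_) (Submodule.mem_sup_left hr)
      refine ⟨⁅x, y⁆, ?_, ?_⟩
      · rw [derivedSeriesOfIdeal_succ]
        exact LieSubmodule.lie_mem_lie hx hy
      · rw [Module.End.pow_apply, pow_succ, mul_comm]
        rfl
    rw [add_lie, lie_add (D^[n] x)]
    refine add_mem (Submodule.mem_sup_left (lie_mem_left F L I _ _ ha))
      (add_mem (Submodule.mem_sup_left (lie_mem_right F L I _ _ hb)) h1)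

/-- Let `L` be a Lie algebra over a field `F` of characteristic `0`, and
let `S(L)` denote the sum of all solvable ideals of `L`. Then `S(L)` is a characteristic
ideal: `D(S(L)) ⊆ S(L)` for every derivation `D` of `L`. -/
theorem statement8 (F L : Type*) [Field F] [CharZero F] [LieRing L] [LieAlgebra F L]
    (S : LieIdeal F L)
    (hS : S = sSup {I : LieIdeal F L | ∃ k : ℕ, LieAlgebra.derivedSeriesOfIdeal F L k I = ⊥})
    (D : LieDerivation F L L) :
    Submodule.map D.toLinearMap S.toSubmodule ≤ S.toSubmodule := by
  rw [Submodule.map_le_iff_le_comap]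
  conv_lhs => rw [hS]
  rw [LieSubmodule.sSup_toSubmodule]
  refine sSup_le ?_
  rintro _ ⟨I, ⟨k, hk⟩, rfl⟩
  have h := aux_high I D k
  rw [hk] at h
  simp only [LieSubmodule.bot_toSubmodule, Submodule.map_bot, sup_bot_eq,
    LieSubmodule.toSubmodule_le_toSubmodule] at h
  have hJ : LieAlgebra.derivedSeriesOfIdeal F L (k + k) (addDer I D) = ⊥ := by
    rw [LieAlgebra.derivedSeriesOfIdeal_add, eq_bot_iff, ← hk]
    exact LieAlgebra.derivedSeriesOfIdeal_mono h k
  have hle : addDer I D ≤ S := hS ▸ le_sSup ⟨_, hJ⟩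
  intro x hx
  exact hle (Submodule.mem_sup_right (Submodule.mem_map_of_mem hx) :
    D.toLinearMap x ∈ I.toSubmodule ⊔ I.toSubmodule.map D.toLinearMap)
end

section
/- Let L be a Lie algebra over a field F of characteristic 0, let I be an abelian ideal of L, and let D be a derivation of L. Then for every positive integer k, the span [Dᵏ(I), Dᵏ(I)] of all brackets of elements of Dᵏ(I) is contained in the ideal J_{k−1} = I + D(I) + ⋯ + D^{k−1}(I). -/
theorem aux_mono {F L : Type*} [Field F] [LieRing L] [LieAlgebra F L]
    (I : LieIdeal F L) (D : LieDerivation F L L) {m n : ℕ} (h : m ≤ n) :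
    (⨆ j ∈ Finset.range m, Submodule.map (D.toLinearMap ^ j) I.toSubmodule) ≤
      ⨆ j ∈ Finset.range n, Submodule.map (D.toLinearMap ^ j) I.toSubmodule :=
  biSup_mono fun i hi => by
    simp only [Finset.mem_range] at hi ⊢; omega

theorem aux_D {F L : Type*} [Field F] [LieRing L] [LieAlgebra F L]
    (I : LieIdeal F L) (D : LieDerivation F L L) (n : ℕ) :
    (⨆ j ∈ Finset.range n, Submodule.map (D.toLinearMap ^ j) I.toSubmodule) ≤
      (⨆ j ∈ Finset.range (n + 1),
        Submodule.map (D.toLinearMap ^ j) I.toSubmodule).comap D.toLinearMap := by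
  refine iSup₂_le fun j hj => ?_
  rintro _ ⟨a, ha, rfl⟩
  rw [Submodule.mem_comap]
  have hj' : j + 1 ∈ Finset.range (n + 1) := by
    simp only [Finset.mem_range] at hj ⊢; omega
  refine Submodule.mem_iSup_of_mem (j + 1) (Submodule.mem_iSup_of_mem hj' ⟨a, ha, ?_⟩)
  rw [pow_succ', Module.End.mul_apply]

theorem aux_lie {F L : Type*} [Field F] [LieRing L] [LieAlgebra F L]
    (I : LieIdeal F L) (D : LieDerivation F L L) {a : L} (ha : a ∈ I) (j : ℕ) :
    ∀ x : L, ⁅(D.toLinearMap ^ j) a, x⁆ ∈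
      ⨆ i ∈ Finset.range (j + 1), Submodule.map (D.toLinearMap ^ i) I.toSubmodule := by
  induction j with
  | zero =>
    intro x
    refine Submodule.mem_iSup_of_mem 0 (Submodule.mem_iSup_of_mem (by simp) ⟨⁅a, x⁆, ?_, by simp⟩)
    exact lie_mem_left F L I a x ha
  | succ j ih =>
    intro x
    have h1 := aux_D I D (j + 1) (ih x)
    have h2 := aux_mono I D (Nat.le_succ (j + 1)) (ih (D x))
    rw [Submodule.mem_comap] at h1
    have h3 : ⁅(D.toLinearMap ^ (j + 1)) a, x⁆ =
        D.toLinearMap ⁅(D.toLinearMap ^ j) a, x⁆ - ⁅(D.toLinearMap ^ j) a, D x⁆ := by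
      rw [pow_succ', Module.End.mul_apply]
      have := LieDerivation.apply_lie_eq_add D ((D.toLinearMap ^ j) a) x
      change _ = D _ - _
      rw [this, add_sub_cancel_left]
      rfl
    rw [h3]
    exact Submodule.sub_mem _ h1 h2

/-- Let `L` be a Lie algebra over a field `F` of characteristic `0`,
let `I` be an abelian ideal of `L`, and let `D` be a derivation of `L`. Then for every
positive integer `k`, the span `[Dᵏ(I), Dᵏ(I)]` of all brackets of elements of `Dᵏ(I)` is
contained in the ideal `J_{k-1} = I + D(I) + ⋯ + D^{k-1}(I)`. -/
theorem statement11 (F L : Type*) [Field F] [CharZero F] [LieRing L] [LieAlgebra F L]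
    (I : LieIdeal F L) (habelian : (⁅I, I⁆ : LieIdeal F L) = ⊥)
    (D : LieDerivation F L L) (k : ℕ) (hk : 0 < k) :
    Submodule.span F
        {z : L | ∃ x ∈ Submodule.map (D.toLinearMap ^ k) I.toSubmodule,
          ∃ y ∈ Submodule.map (D.toLinearMap ^ k) I.toSubmodule, z = ⁅x, y⁆} ≤
      ⨆ j ∈ Finset.range k, Submodule.map (D.toLinearMap ^ j) I.toSubmodule := by
  rw [Submodule.span_le]
  rintro _ ⟨_, ⟨a, ha, rfl⟩, _, ⟨b, hb, rfl⟩, rfl⟩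
  have hab : ⁅a, b⁆ = 0 := by
    have : ⁅a, b⁆ ∈ (⁅I, I⁆ : LieIdeal F L) := LieSubmodule.lie_mem_lie ha hb
    rwa [habelian, LieSubmodule.mem_bot] at this
  have hpow : ∀ (n : ℕ) (x : L), D^[n] x = (D.toLinearMap ^ n) x := by
    intro n x
    rw [Module.End.pow_apply]; rfl
  have hL := LieDerivation.iterate_apply_lie' D (2 * k) a b
  simp only [hpow, hab, map_zero] at hL
  rw [← Finset.sum_erase_add _ _ (show k ∈ Finset.range (2 * k + 1) by simp; omega)] at hL
  have hk2 : 2 * k - k = k := by omega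
  rw [hk2] at hL
  have hmem : ((2 * k).choose k) • ⁅(D.toLinearMap ^ k) a, (D.toLinearMap ^ k) b⁆ ∈
      ⨆ j ∈ Finset.range k, Submodule.map (D.toLinearMap ^ j) I.toSubmodule := by
    rw [← neg_eq_of_add_eq_zero_right hL.symm]
    refine Submodule.neg_mem _ (Submodule.sum_mem _ fun i hi => ?_)
    refine nsmul_mem ?_ _
    simp only [Finset.mem_erase, Finset.mem_range] at hi
    rcases lt_or_gt_of_ne hi.1 with h | h
    · exact aux_mono I D (by omega) (aux_lie I D ha i _)
    · rw [← lie_skew]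
      exact Submodule.neg_mem _ (aux_mono I D (by omega) (aux_lie I D hb (2 * k - i) _))
  rw [← Nat.cast_smul_eq_nsmul F] at hmem
  have hne : (((2 * k).choose k : ℕ) : F) ≠ 0 :=
    Nat.cast_ne_zero.mpr (Nat.choose_pos (by omega)).ne'
  exact (Submodule.smul_mem_iff _ hne).mp hmem
end
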